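/- Two continuous maps f, g : 𝖱^n → 𝖱 are (freely) homotopic if and only if 𝔠(f) = 𝔠(g). -/

import Mathlib

noncomputable section
open Set

/-- The first uncountable ordinal `ω₁`. -/
def Omega1 : Ordinal := Ordinal.omega 1

/-- The closed long ray `𝖱`: `ω₁ × [0,1)` with the lexicographic order. -/
def LongRay : Type 1 := {o : Ordinal // o < Omega1} ×ₗ (Set.Ico (0:ℝ) 1)

instance : LinearOrder LongRay :=
  inferInstanceAs (LinearOrder ({o : Ordinal // o < Omega1} ×ₗ (Set.Ico (0:ℝ) 1)))

/-- `𝖱` carries the order topology. -/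
instance : TopologicalSpace LongRay := Preorder.topology LongRay
instance : OrderTopology LongRay := ⟨rfl⟩

lemma omega1_pos : (0 : Ordinal) < Omega1 := Ordinal.omega_pos 1

/-- The point `0 = (0,0)` of the long ray. -/
def rayZero : LongRay := toLex (⟨0, omega1_pos⟩, ⟨0, by simp⟩)

/-- Identification of the countable ordinal `o` with the point `(o,0)` of the long ray
(junk value for `o ≥ ω₁`). -/
def ordR (o : Ordinal) : LongRay :=
  if h : o < Omega1 then toLex (⟨o, h⟩, ⟨0, by simp⟩) else rayZero

/-- The `I`-diagonal at height `c` (only the values of `c` off `I` are relevant). -/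
def Delta (n : ℕ) (I : Finset (Fin n)) (c : Fin n → LongRay) : Set (Fin n → LongRay) :=
  {x | (∀ i ∈ I, ∀ i' ∈ I, x i = x i') ∧ ∀ j ∉ I, x j = c j}

/-- `f` is `I`-cofinal if `f` restricted to `Δ_I = Δ_I(0)` is unbounded. -/
def ICofinal (n : ℕ) (f : (Fin n → LongRay) → LongRay) (I : Finset (Fin n)) : Prop :=
  ¬ BddAbove (f '' Delta n I (fun _ => rayZero))

/-- The cofinality class `𝔠(f) = {I : f is I-cofinal}`. -/
def cofClass (n : ℕ) (f : (Fin n → LongRay) → LongRay) : Set (Finset (Fin n)) :=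
  {I | ICofinal n f I}

/-- `M_I(c) = {x : x_i ≥ c for all i ∈ I}`. -/
def MSet (n : ℕ) (I : Finset (Fin n)) (c : LongRay) : Set (Fin n → LongRay) :=
  {x | ∀ i ∈ I, c ≤ x i}

/-- `E_I(b,d) = {x ∈ M_I(d) : x_j = b_j for all j ∉ I}`. -/
def ESet (n : ℕ) (I : Finset (Fin n)) (b : Fin n → LongRay) (d : LongRay) :
    Set (Fin n → LongRay) :=
  {x | (∀ i ∈ I, d ≤ x i) ∧ ∀ j ∉ I, x j = b j}

/-!
Every continuous `h : 𝖱 → 𝖱` that is unbounded tends to infinity, and whether it is bounded is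
invariant under homotopy: along a path of maps both the bounded and the unbounded ones form a
closed set of parameters, because countable subsets of `𝖱` are bounded. Hence the cofinality class
is a homotopy invariant, and it can be computed on diagonals at any height.

Conversely, suppose `f` and `g` have the same class. Leapfrogging (taking suprema of sequences in
which each term is large compared with the previous one) gives a closed unbounded set of levels `a`
such that, with `I = {i : a ≤ x i}`, `f x` and `g x` are both at least `a` or both at most `a`,
according to whether `f` is `I`-cofinal. Thus no `a` in a closed unbounded, well-ordered
set `C` of countable ordinals lies strictly between `f x` and `g x`, and the same holds for `f` and
`f ⊔ g`. Between consecutive points of `C` a path pushes `f` up to `f ⊔ g`; these pushes fit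
together to a homotopy, and by symmetry `g` is homotopic to `f ⊔ g` as well.
-/

open Filter Topology

/-! ### Orders in which countable sets are bounded -/

lemma bddAbove_range_of_countable {α κ : Type*} [Preorder α] [IsDirectedOrder α] [Nonempty α]
    [CountableInterFilter (atTop : Filter α)] [Countable κ] (u : κ → α) : BddAbove (range u) := by
  obtain ⟨b, hb⟩ := (eventually_countable_forall.2 fun k => eventually_ge_atTop (u k)).exists
  exact ⟨b, forall_mem_range.2 hb⟩

lemma countableInterFilter_atTop_of_bddAbove {α : Type*} [Preorder α] [IsDirectedOrder α]
    [Nonempty α] (h : ∀ s : Set α, s.Countable → BddAbove s) :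
    CountableInterFilter (atTop : Filter α) where
  countable_sInter_mem S hS hmem := by
    choose! b hb using fun s hs => mem_atTop_sets.1 (hmem s hs)
    obtain ⟨B, hB⟩ := h (b '' S) (hS.image b)
    exact mem_atTop_sets.2 ⟨B, fun x hx s hs => hb s hs x ((hB ⟨s, hs, rfl⟩).trans hx)⟩

section Leapfrog

variable {R : Type*} [ConditionallyCompleteLinearOrder R] [CountableInterFilter (atTop : Filter R)]

lemma exists_monotone_seq_isLUB {r : ℕ → R → R → Prop} (hr : ∀ k a, ∃ b, a ≤ b ∧ r k a b) (c : R) :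
    ∃ (u : ℕ → R) (a : R), Monotone u ∧ c ≤ u 0 ∧ IsLUB (range u) a ∧
      ∀ k, r k (u k) (u (k + 1)) := by
  choose next hle hnext using hr
  let u : ℕ → R := fun k => Nat.rec c next k
  have : Nonempty R := ⟨c⟩
  exact ⟨u, ⨆ k, u k, monotone_nat_of_le_succ fun k => hle k (u k), le_rfl,
    isLUB_ciSup (bddAbove_range_of_countable u), fun k => hnext k (u k)⟩

lemma isClub_inter {A B : Set R} (hA : IsClub A) (hB : IsClub B) : IsClub (A ∩ B) := by
  refine ⟨hA.dirSupClosed.inter hB.dirSupClosed, fun c => ?_⟩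
  obtain ⟨u, a, -, hc, ha, hu⟩ := exists_monotone_seq_isLUB
    (r := fun _ a b => (∃ x ∈ A, a ≤ x ∧ x ≤ b) ∧ b ∈ B) (fun _ a => by
      obtain ⟨x, hxA, hax⟩ := hA.isCofinal a
      obtain ⟨b, hbB, hxb⟩ := hB.isCofinal x
      exact ⟨b, hax.trans hxb, ⟨x, hxA, hax, hxb⟩, hbB⟩) c
  have hua : ∀ k, u k ≤ a := fun k => ha.1 (mem_range_self k)
  choose x hxA hux hxu using fun k => (hu k).1
  have hx : IsLUB (range x) a :=
    ⟨forall_mem_range.2 fun k => (hxu k).trans (hua (k + 1)), fun b hb =>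
      ha.2 (forall_mem_range.2 fun k => (hux k).trans (hb (mem_range_self k)))⟩
  have hu' : IsLUB (range fun k => u (k + 1)) a :=
    ⟨forall_mem_range.2 fun k => hua (k + 1), fun b hb =>
      hx.2 (forall_mem_range.2 fun k => (hxu k).trans (hb (mem_range_self k)))⟩
  exact ⟨a, ⟨hA.isLUB_mem (range_subset_iff.2 hxA) (range_nonempty x) hx,
    hB.isLUB_mem (range_subset_iff.2 fun k => (hu k).2) (range_nonempty _) hu'⟩, hc.trans (hua 0)⟩

end Leapfrog

lemma dirSupClosed_of_isClosed {α : Type*} [LinearOrder α] [TopologicalSpace α] [OrderTopology α]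
    {s : Set α} (hs : IsClosed s) : DirSupClosed s :=
  fun _ hts ht _ _ ha => closure_minimal hts hs (ha.mem_closure ht)

/-! ### Bounded and unbounded continuous maps -/

lemma frequently_le_of_not_bddAbove_range {α β : Type*} [LinearOrder α] [OrderBot α]
    [TopologicalSpace α] [CompactIccSpace α] [LinearOrder β] [TopologicalSpace β]
    [OrderClosedTopology β] {h : α → β} (hc : Continuous h) (hu : ¬ BddAbove (range h)) (b : β) :
    ∃ᶠ x in atTop, b ≤ h x := by
  intro hlt
  obtain ⟨a, ha⟩ := eventually_atTop.1 hlt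
  have : Nonempty β := ⟨b⟩
  obtain ⟨m, hm⟩ := ((isCompact_Icc (a := ⊥) (b := a)).image hc).bddAbove
  refine hu ⟨m ⊔ b, forall_mem_range.2 fun x => ?_⟩
  rcases le_total a x with hx | hx
  · exact (not_le.1 (ha x hx)).le.trans le_sup_right
  · exact (hm ⟨x, ⟨bot_le, hx⟩, rfl⟩).trans le_sup_left

lemma isClosed_setOf_bddAbove_range {T X α : Type*} [TopologicalSpace T] [SequentialSpace T]
    [TopologicalSpace X] [Preorder α] [IsDirectedOrder α] [Nonempty α]
    [CountableInterFilter (atTop : Filter α)] [TopologicalSpace α] [ClosedIicTopology α]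
    (H : C(T × X, α)) : IsClosed {t | BddAbove (range fun x => H (t, x))} := by
  refine IsSeqClosed.isClosed fun t s ht hts => ?_
  choose m hm using ht
  obtain ⟨M, hM⟩ := bddAbove_range_of_countable m
  refine ⟨M, forall_mem_range.2 fun x => ?_⟩
  have hlim : Tendsto (fun k => H (t k, x)) atTop (𝓝 (H (s, x))) :=
    (H.continuous.tendsto _).comp (hts.prodMk_nhds tendsto_const_nhds)
  exact le_of_tendsto' hlim fun k => (hm k (mem_range_self x)).trans (hM (mem_range_self k))

section LongOrder

variable {R : Type*} [ConditionallyCompleteLinearOrderBot R] [TopologicalSpace R] [OrderTopology R]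
  [CountableInterFilter (atTop : Filter R)]

lemma isClub_setOf_le_apply {h : R → R} (hc : Continuous h) (hu : ¬ BddAbove (range h)) :
    IsClub {x | x ≤ h x} := by
  refine ⟨dirSupClosed_of_isClosed (isClosed_le continuous_id hc), fun c => ?_⟩
  obtain ⟨u, a, hmono, hcu, ha, hle⟩ := exists_monotone_seq_isLUB (r := fun _ a x => a ≤ h x)
    (fun _ a => frequently_atTop.1 (frequently_le_of_not_bddAbove_range hc hu a) a) c
  have hua := tendsto_atTop_isLUB hmono ha
  have hhu := (hc.tendsto a).comp ((tendsto_add_atTop_iff_nat 1).2 hua)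
  exact ⟨a, le_of_tendsto_of_tendsto' hua hhu hle, hcu.trans (ha.1 (mem_range_self 0))⟩

lemma tendsto_atTop_of_not_bddAbove_range [NoMaxOrder R] {h : R → R} (hc : Continuous h)
    (hu : ¬ BddAbove (range h)) : Tendsto h atTop atTop := by
  refine tendsto_atTop.2 fun b => ?_
  by_contra hb
  have hclub : IsClub {x | h x ≤ b} :=
    ⟨dirSupClosed_of_isClosed (isClosed_le hc continuous_const), fun a => by
      obtain ⟨x, hax, hxb⟩ := frequently_atTop.1 (not_eventually.1 hb) a
      exact ⟨x, (not_le.1 hxb).le, hax⟩⟩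
  obtain ⟨c, hbc⟩ := exists_gt b
  obtain ⟨x, ⟨hxh, hhb⟩, hcx⟩ := (isClub_inter (isClub_setOf_le_apply hc hu) hclub).isCofinal c
  exact (hbc.trans_le (hcx.trans (hxh.trans hhb))).false

variable [NoMaxOrder R] {T : Type*} [TopologicalSpace T] [SequentialSpace T]

lemma isOpen_setOf_bddAbove_range (H : C(T × R, R)) :
    IsOpen {t | BddAbove (range fun x => H (t, x))} := by
  rw [← isClosed_compl_iff]
  refine IsSeqClosed.isClosed fun t s ht hts => ?_
  rintro ⟨M, hM⟩
  obtain ⟨c, hMc⟩ := exists_gt M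
  obtain ⟨u, a, hmono, hcu, ha, hle⟩ := exists_monotone_seq_isLUB
    (r := fun k a x => a ≤ H (t k, x)) (fun k a => frequently_atTop.1
      (frequently_le_of_not_bddAbove_range (H.continuous.comp (.prodMk_right (t k))) (ht k) a) a) c
  have hua := tendsto_atTop_isLUB hmono ha
  have hHu : Tendsto (fun k => H (t k, u (k + 1))) atTop (𝓝 (H (s, a))) :=
    (H.continuous.tendsto _).comp (hts.prodMk_nhds ((tendsto_add_atTop_iff_nat 1).2 hua))
  have hca : c ≤ a := hcu.trans (ha.1 (mem_range_self 0))
  exact ((hMc.trans_le hca).trans_le (le_of_tendsto_of_tendsto' hua hHu hle)).not_ge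
    (hM (mem_range_self a))

lemma bddAbove_range_iff_of_preconnectedSpace [PreconnectedSpace T] (H : C(T × R, R)) (s t : T) :
    BddAbove (range fun x => H (s, x)) ↔ BddAbove (range fun x => H (t, x)) := by
  have hclopen : IsClopen {t | BddAbove (range fun x => H (t, x))} :=
    ⟨isClosed_setOf_bddAbove_range H, isOpen_setOf_bddAbove_range H⟩
  exact ⟨fun hs => eq_univ_iff_forall.1 (hclopen.eq_univ ⟨s, hs⟩) t,
    fun ht => eq_univ_iff_forall.1 (hclopen.eq_univ ⟨t, ht⟩) s⟩

end LongOrder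

/-! ### Diagonals -/

section DiagPt

variable {ι α : Type*} [DecidableEq ι]

/-- The point with coordinates `a` on `I` and `y` off `I`; as `a` varies it runs through the
`I`-diagonal at height `y`. -/
def diagPt (I : Finset ι) (y : ι → α) (a : α) : ι → α := I.piecewise (fun _ => a) y

lemma diagPt_of_mem {I : Finset ι} {i : ι} (hi : i ∈ I) (y : ι → α) (a : α) :
    diagPt I y a i = a :=
  I.piecewise_eq_of_mem _ _ hi

lemma diagPt_of_notMem {I : Finset ι} {i : ι} (hi : i ∉ I) (y : ι → α) (a : α) :
    diagPt I y a i = y i :=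
  I.piecewise_eq_of_notMem _ _ hi

lemma diagPt_diagPt_of_subset {I J : Finset ι} (hIJ : I ⊆ J) (y : ι → α) (a : α) :
    diagPt I (diagPt J y a) a = diagPt J y a := by
  funext i
  by_cases hi : i ∈ I
  · rw [diagPt_of_mem hi, diagPt_of_mem (hIJ hi)]
  · rw [diagPt_of_notMem hi]

lemma continuous_diagPt [TopologicalSpace α] (I : Finset ι) :
    Continuous fun p : (ι → α) × α => diagPt I p.1 p.2 := by
  refine continuous_pi fun i => ?_
  by_cases hi : i ∈ I
  · simpa only [diagPt_of_mem hi] using continuous_snd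
  · simp only [diagPt_of_notMem hi]
    exact (continuous_apply i).comp continuous_fst

lemma tendsto_diagPt [TopologicalSpace α] {κ : Type*} {l : Filter κ} (I : Finset ι)
    {Y : κ → ι → α} {u : κ → α} {y : ι → α} {a : α} (hY : Tendsto Y l (𝓝 y))
    (hu : Tendsto u l (𝓝 a)) : Tendsto (fun k => diagPt I (Y k) (u k)) l (𝓝 (diagPt I y a)) :=
  ((continuous_diagPt I).tendsto (y, a)).comp (hY.prodMk_nhds hu)

end DiagPt

section Cofinality

variable {ι R : Type*} [DecidableEq ι] [ConditionallyCompleteLinearOrderBot R]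
  [TopologicalSpace R]

/-- `I`-cofinality of `f`, for an arbitrary index type and order; `mem_cofClass_iff` compares it
with `cofClass`. -/
def CofinalOnDiag (f : C(ι → R, R)) (I : Finset ι) : Prop :=
  ¬ BddAbove (range fun a => f (diagPt I ⊥ a))

variable [OrderTopology R] [CountableInterFilter (atTop : Filter R)] [NoMaxOrder R]

lemma cofinalOnDiag_iff_of_homotopic {f g : C(ι → R, R)} (h : f.Homotopic g) (I : Finset ι) :
    CofinalOnDiag f I ↔ CofinalOnDiag g I := by
  obtain ⟨H⟩ := h
  let δ : C(R, ι → R) := ⟨diagPt I ⊥, (continuous_diagPt I).comp (.prodMk_right ⊥)⟩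
  have hH := bddAbove_range_iff_of_preconnectedSpace
    (H.toContinuousMap.comp ((ContinuousMap.id unitInterval).prodMap δ)) 0 1
  simpa [δ, CofinalOnDiag] using not_congr hH

variable [PreconnectedSpace R] [FirstCountableTopology R] [Countable ι] {f : C(ι → R, R)}
  {I J : Finset ι}

lemma cofinalOnDiag_iff_height (f : C(ι → R, R)) (I : Finset ι) (y : ι → R) :
    CofinalOnDiag f I ↔ ¬ BddAbove (range fun a => f (diagPt I y a)) :=
  not_congr (bddAbove_range_iff_of_preconnectedSpace (f.comp ⟨_, continuous_diagPt I⟩) ⊥ y)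

lemma CofinalOnDiag.tendsto (hf : CofinalOnDiag f I) (y : ι → R) :
    Tendsto (fun a => f (diagPt I y a)) atTop atTop :=
  tendsto_atTop_of_not_bddAbove_range
    (f.continuous.comp ((continuous_diagPt I).comp (.prodMk_right y)))
    ((cofinalOnDiag_iff_height f I y).1 hf)

lemma CofinalOnDiag.mono (hf : CofinalOnDiag f I) (hIJ : I ⊆ J) : CofinalOnDiag f J := by
  rintro ⟨M, hM⟩
  obtain ⟨c, hMc⟩ := exists_gt M
  obtain ⟨u, a, hmono, hcu, ha, hle⟩ := exists_monotone_seq_isLUB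
    (r := fun _ a x => a ≤ f (diagPt I (diagPt J ⊥ a) x)) (fun _ a =>
      ((eventually_ge_atTop a).and
        ((hf.tendsto (diagPt J ⊥ a)).eventually_ge_atTop a)).exists) c
  have hua := tendsto_atTop_isLUB hmono ha
  have hlim : Tendsto (fun k => diagPt I (diagPt J ⊥ (u k)) (u (k + 1))) atTop
      (𝓝 (diagPt J ⊥ a)) := by
    rw [← diagPt_diagPt_of_subset hIJ]
    exact tendsto_diagPt I (tendsto_diagPt J tendsto_const_nhds hua)
      ((tendsto_add_atTop_iff_nat 1).2 hua)
  have hfa : a ≤ f (diagPt J ⊥ a) :=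
    le_of_tendsto_of_tendsto' hua ((f.continuous.tendsto _).comp hlim) hle
  exact (hMc.trans_le ((hcu.trans (ha.1 (mem_range_self 0))).trans hfa)).not_ge
    (hM (mem_range_self a))

end Cofinality

section Accumulation

variable {ι R : Type*} [DecidableEq ι] [Countable ι] [ConditionallyCompleteLinearOrderBot R]
  [TopologicalSpace R] [OrderTopology R] [CountableInterFilter (atTop : Filter R)]
  [FirstCountableTopology R]

/-- The coordinates off `I` cluster by compactness; leapfrogging then makes all coordinates on `I`
converge to the same `a`. -/
lemma exists_tendsto_diagPt (I : Finset ι) (X : R → ι → R) (b : R)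
    (hI : ∀ a, ∀ i ∈ I, a ≤ X a i) (hb : ∀ a, ∀ j ∉ I, X a j ≤ b) :
    ∃ y, ∀ c, ∃ a, c ≤ a ∧ ∃ v : ℕ → R, Tendsto v atTop (𝓝 a) ∧
      Tendsto (fun k => X (v k)) atTop (𝓝 (diagPt I y a)) := by
  have hbox : ∀ a, diagPt I (X a) ⊥ ∈ Icc ⊥ (fun _ : ι => b) := fun a => ⟨bot_le, fun i => by
    by_cases hi : i ∈ I
    · exact (diagPt_of_mem hi _ _).trans_le bot_le
    · exact (diagPt_of_notMem hi _ _).trans_le (hb a i hi)⟩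
  obtain ⟨y, -, hy⟩ := isCompact_Icc.exists_mapClusterPt (f := atTop)
    (u := fun a => diagPt I (X a) ⊥) (tendsto_principal.2 (.of_forall hbox))
  obtain ⟨V, hV⟩ := (𝓝 y).exists_antitone_basis
  refine ⟨y, fun c => ?_⟩
  obtain ⟨u, a, hmono, hcu, ha, hR⟩ := exists_monotone_seq_isLUB
    (r := fun k a b => ∃ x, a ≤ x ∧ x ≤ b ∧ diagPt I (X x) ⊥ ∈ V k ∧ ∀ i, X x i ≤ b)
    (fun k a => by
      obtain ⟨x, hax, hxV⟩ := frequently_atTop.1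
        (mapClusterPt_iff_frequently.1 hy _ (hV.1.mem_of_mem trivial)) a
      obtain ⟨m, hm⟩ := bddAbove_range_of_countable (X x)
      exact ⟨x ⊔ m, hax.trans le_sup_left, x, hax, le_sup_left, hxV,
        fun i => (hm (mem_range_self i)).trans le_sup_right⟩) c
  choose v huv hvu hvV hXu using hR
  have hua := tendsto_atTop_isLUB hmono ha
  have squeeze : ∀ w : ℕ → R, (∀ k, u k ≤ w k) → (∀ k, w k ≤ u (k + 1)) →
      Tendsto w atTop (𝓝 a) := fun w huw hwu =>
    tendsto_of_tendsto_of_tendsto_of_le_of_le hua ((tendsto_add_atTop_iff_nat 1).2 hua) huw hwu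
  refine ⟨a, hcu.trans (ha.1 (mem_range_self 0)), v, squeeze v huv hvu,
    tendsto_pi_nhds.2 fun i => ?_⟩
  by_cases hi : i ∈ I
  · rw [diagPt_of_mem hi]
    exact squeeze _ (fun k => (huv k).trans (hI _ i hi)) fun k => hXu k i
  · have hXy := tendsto_pi_nhds.1 (hV.tendsto hvV) i
    simp only [diagPt_of_notMem hi] at hXy ⊢
    exact hXy

end Accumulation

/-! ### Growth of a map in terms of its cofinality class -/

lemma exists_large_point_of_forall_erase {ι R : Type*} [DecidableEq ι] [LinearOrder R]
    {f : (ι → R) → R} {J : Finset ι} {b : R}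
    (hbdd : ∀ i ∈ J, ∀ b, ∃ M, ∀ x : ι → R, (∀ j ∉ J.erase i, x j ≤ b) → f x ≤ M)
    (hunbdd : ∀ M, ∃ x : ι → R, (∀ j ∉ J, x j ≤ b) ∧ M < f x) (a : R) :
    ∃ x : ι → R, (∀ i ∈ J, a ≤ x i) ∧ (∀ j ∉ J, x j ≤ b) ∧ a ≤ f x := by
  choose! M hM using hbdd
  have : Nonempty R := ⟨a⟩
  obtain ⟨N, hN⟩ := (J.finite_toSet.image fun i => M i (a ⊔ b)).bddAbove
  obtain ⟨x, hxb, hfx⟩ := hunbdd (N ⊔ a)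
  refine ⟨x, fun i hi => ?_, hxb, le_sup_right.trans hfx.le⟩
  by_contra! hxa
  have hxab : ∀ j ∉ J.erase i, x j ≤ a ⊔ b := fun j hj => by
    rcases eq_or_ne j i with rfl | hji
    · exact hxa.le.trans le_sup_left
    · exact (hxb j fun hjJ => hj (Finset.mem_erase.2 ⟨hji, hjJ⟩)).trans le_sup_right
  exact (le_sup_left.trans_lt hfx).not_ge ((hM i hi _ x hxab).trans (hN ⟨i, hi, rfl⟩))

section Growth

variable {ι R : Type*} [DecidableEq ι] [Countable ι] [ConditionallyCompleteLinearOrderBot R]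
  [TopologicalSpace R] [OrderTopology R] [CountableInterFilter (atTop : Filter R)] [NoMaxOrder R]
  [PreconnectedSpace R] [FirstCountableTopology R] {f : C(ι → R, R)} {I : Finset ι}

lemma CofinalOnDiag.eventually_forall_le (hf : CofinalOnDiag f I) (b c : R) :
    ∀ᶠ d in atTop, ∀ x : ι → R, (∀ i ∈ I, d ≤ x i) → (∀ j ∉ I, x j ≤ b) → c ≤ f x := by
  suffices h : ∃ d, ∀ x : ι → R, (∀ i ∈ I, d ≤ x i) → (∀ j ∉ I, x j ≤ b) → c ≤ f x by
    obtain ⟨d, hd⟩ := h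
    filter_upwards [eventually_ge_atTop d] with e hde x hx
    exact hd x fun i hi => hde.trans (hx i hi)
  by_contra! h
  choose X hI hb hX using h
  obtain ⟨y, hy⟩ := exists_tendsto_diagPt I X b hI hb
  obtain ⟨d, hd⟩ := eventually_atTop.1 ((hf.tendsto y).eventually_gt_atTop c)
  obtain ⟨a, hda, v, -, hv⟩ := hy d
  have hfa : f (diagPt I y a) ≤ c :=
    le_of_tendsto' ((f.continuous.tendsto _).comp hv) fun k => (hX (v k)).le
  exact hfa.not_gt (hd a hda)

lemma exists_forall_le_of_not_cofinalOnDiag (hf : ¬ CofinalOnDiag f I) (b : R) :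
    ∃ M, ∀ x : ι → R, (∀ j ∉ I, x j ≤ b) → f x ≤ M := by
  induction I using Finset.strongInduction generalizing b with
  | H I ih =>
    by_contra! hunbdd
    have hbdd : ∀ i ∈ I, ∀ b, ∃ M, ∀ x : ι → R, (∀ j ∉ I.erase i, x j ≤ b) → f x ≤ M :=
      fun i hi => ih _ (Finset.erase_ssubset hi) fun hc => hf (hc.mono (Finset.erase_subset i I))
    choose X hI hb hX using exists_large_point_of_forall_erase hbdd hunbdd
    obtain ⟨y, hy⟩ := exists_tendsto_diagPt I X b hI hb
    obtain ⟨M, hM⟩ := not_not.1 ((cofinalOnDiag_iff_height f I y).not.1 hf)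
    obtain ⟨c, hMc⟩ := exists_gt M
    obtain ⟨a, hca, v, hva, hXv⟩ := hy c
    have hfa : a ≤ f (diagPt I y a) :=
      le_of_tendsto_of_tendsto' hva ((f.continuous.tendsto _).comp hXv) fun k => hX (v k)
    exact ((hMc.trans_le hca).trans_le hfa).not_ge (hM (mem_range_self a))

end Growth

/-! ### Levels that do not separate two maps -/

/-- The points that do not lie strictly between values of `f` and `g` at any argument. -/
def nonseparating {X α : Type*} [Preorder α] (f g : X → α) : Set α :=
  {a | ∀ x, (f x < a → g x ≤ a) ∧ (g x < a → f x ≤ a)}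

lemma isClosed_nonseparating {X α : Type*} [LinearOrder α] [TopologicalSpace α]
    [OrderClosedTopology α] (f g : X → α) : IsClosed (nonseparating f g) := by
  have himp : ∀ y z : α, IsClosed {a : α | y < a → z ≤ a} := fun y z => by
    simp only [imp_iff_not_or, not_lt]
    exact isClosed_Iic.union isClosed_Ici
  simp only [nonseparating, ofPred_forall, ofPred_and]
  exact isClosed_iInter fun x => (himp _ _).inter (himp _ _)

lemma bot_mem_nonseparating {X α : Type*} [Preorder α] [OrderBot α] (f g : X → α) :
    ⊥ ∈ nonseparating f g :=
  fun _ => ⟨fun h => absurd h not_lt_bot, fun h => absurd h not_lt_bot⟩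

lemma eventually_forall_notMem_le {ι α : Type*} [Finite ι] [LinearOrder α] [TopologicalSpace α]
    [OrderTopology α] {u : ℕ → α} {a : α} (hu : Tendsto u atTop (𝓝 a)) {x : ι → α} {J : Finset ι}
    (hJ : ∀ i, i ∈ J ↔ a ≤ x i) : ∀ᶠ k in atTop, ∀ j ∉ J, x j ≤ u k :=
  eventually_all.2 fun j => by
    by_cases hj : j ∈ J
    · exact .of_forall fun k hk => absurd hj hk
    · have hxa : x j < a := not_le.1 fun h => hj ((hJ j).2 h)
      exact (hu.eventually_const_lt hxa).mono fun k hk _ => hk.le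

section Threshold

variable {ι R : Type*} [DecidableEq ι] [Finite ι] [ConditionallyCompleteLinearOrderBot R]
  [TopologicalSpace R]

/-- `d` is a threshold for `f` above `a` if the cofinality class decides, for every point whose
coordinates off `I` are at most `a`, whether `f` is at least `a` (as soon as the coordinates on `I`
reach `d`) or at most `d`. -/
def IsThreshold (f : C(ι → R, R)) (a d : R) : Prop :=
  ∀ (I : Finset ι) (x : ι → R), (∀ j ∉ I, x j ≤ a) →
    (CofinalOnDiag f I → (∀ i ∈ I, d ≤ x i) → a ≤ f x) ∧ (¬ CofinalOnDiag f I → f x ≤ d)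

variable [OrderTopology R]

lemma le_apply_and_apply_le_of_isThreshold {f : C(ι → R, R)} {u : ℕ → R} {a : R}
    (hmono : Monotone u) (ha : IsLUB (range u) a) (hu : ∀ k, IsThreshold f (u k) (u (k + 1)))
    {x : ι → R} {J : Finset ι} (hJ : ∀ i, i ∈ J ↔ a ≤ x i) :
    (CofinalOnDiag f J → a ≤ f x) ∧ (¬ CofinalOnDiag f J → f x ≤ a) := by
  have hua : ∀ k, u k ≤ a := fun k => ha.1 (mem_range_self k)
  have hlim := tendsto_atTop_isLUB hmono ha
  have hoff := eventually_forall_notMem_le hlim hJ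
  refine ⟨fun hf => le_of_tendsto hlim (hoff.mono fun k hk => ?_), fun hf => ?_⟩
  · exact (hu k J x hk).1 hf fun i hi => (hua (k + 1)).trans ((hJ i).1 hi)
  · obtain ⟨k, hk⟩ := hoff.exists
    exact ((hu k J x hk).2 hf).trans (hua (k + 1))

variable [CountableInterFilter (atTop : Filter R)] [NoMaxOrder R] [PreconnectedSpace R]
  [FirstCountableTopology R]

lemma eventually_isThreshold (f : C(ι → R, R)) (a : R) : ∀ᶠ d in atTop, IsThreshold f a d := by
  refine eventually_all.2 fun I => ?_
  by_cases hI : CofinalOnDiag f I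
  · filter_upwards [hI.eventually_forall_le a a] with d hd x hx
    exact ⟨fun _ hIx => hd x hIx hx, absurd hI⟩
  · obtain ⟨M, hM⟩ := exists_forall_le_of_not_cofinalOnDiag hI a
    filter_upwards [eventually_ge_atTop M] with d hMd x hx
    exact ⟨fun h => absurd h hI, fun _ => (hM x hx).trans hMd⟩

lemma isClub_nonseparating {f g : C(ι → R, R)} (h : ∀ I, CofinalOnDiag f I ↔ CofinalOnDiag g I) :
    IsClub (nonseparating f g) := by
  refine ⟨dirSupClosed_of_isClosed (isClosed_nonseparating f g), fun c => ?_⟩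
  obtain ⟨u, a, hmono, hcu, ha, hu⟩ := exists_monotone_seq_isLUB
    (r := fun _ a b => IsThreshold f a b ∧ IsThreshold g a b) (fun _ a =>
      ((eventually_ge_atTop a).and
        ((eventually_isThreshold f a).and (eventually_isThreshold g a))).exists) c
  refine ⟨a, fun x => ?_, hcu.trans (ha.1 (mem_range_self 0))⟩
  have hJ : ∀ i, i ∈ (toFinite {i | a ≤ x i}).toFinset ↔ a ≤ x i := by simp
  obtain ⟨hf_ge, hf_le⟩ := le_apply_and_apply_le_of_isThreshold hmono ha (fun k => (hu k).1) hJ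
  obtain ⟨hg_ge, hg_le⟩ := le_apply_and_apply_le_of_isThreshold hmono ha (fun k => (hu k).2) hJ
  exact ⟨fun hfa => hg_le ((h _).not.1 fun hf => (hf_ge hf).not_gt hfa),
    fun hga => hf_le ((h _).not.2 fun hg => (hg_ge hg).not_gt hga)⟩

end Threshold

/-! ### Pushing a map up between consecutive points of a well-ordered club -/

section Consecutive

variable {R : Type*} [ConditionallyCompleteLinearOrderBot R] {C : Set R} {a x : R}

/-- The greatest point of `C` that is at most `x`, when `C` is a club containing `⊥`. -/
def prevIn (C : Set R) (x : R) : R := sSup (C ∩ Iic x)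

/-- The least point of `C` above `x`, when `C` is cofinal and well-ordered. -/
def nextIn (C : Set R) (x : R) : R := sInf (C ∩ Ioi x)

lemma prevIn_le (C : Set R) (x : R) : prevIn C x ≤ x := csSup_le' fun _ hy => hy.2

lemma le_prevIn (ha : a ∈ C) (hax : a ≤ x) : a ≤ prevIn C x :=
  le_csSup (bddAbove_Iic.mono inter_subset_right) ⟨ha, hax⟩

lemma prevIn_mem (hC : IsClub C) (hbot : ⊥ ∈ C) (x : R) : prevIn C x ∈ C :=
  hC.csSup_mem inter_subset_left ⟨⊥, hbot, bot_le⟩ (bddAbove_Iic.mono inter_subset_right)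

lemma nextIn_le (ha : a ∈ C) (hxa : x < a) : nextIn C x ≤ a :=
  csInf_le (OrderBot.bddBelow _) ⟨ha, hxa⟩

lemma nextIn_mem_inter [NoMaxOrder R] (hC : IsCofinal C) (hwf : C.IsWF) (x : R) :
    nextIn C x ∈ C ∩ Ioi x := by
  obtain ⟨y, hxy⟩ := exists_gt x
  obtain ⟨a, ha, hya⟩ := hC y
  have hne : (C ∩ Ioi x).Nonempty := ⟨a, ha, hxy.trans_le hya⟩
  have hwf' : (C ∩ Ioi x).IsWF := hwf.mono inter_subset_left
  exact IsLeast.csInf_mem ⟨hwf'.min_mem hne, fun b hb => hwf'.min_le hne hb⟩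

lemma lt_nextIn_prevIn [NoMaxOrder R] (hC : IsCofinal C) (hwf : C.IsWF) (x : R) :
    x < nextIn C (prevIn C x) := by
  obtain ⟨hmem, hlt⟩ := nextIn_mem_inter hC hwf (prevIn C x)
  by_contra! hle
  exact (le_prevIn hmem hle).not_gt hlt

lemma prevIn_eq_of_mem_Ico (hC : IsClub C) (hbot : ⊥ ∈ C) (ha : a ∈ C)
    (hx : x ∈ Ico a (nextIn C a)) : prevIn C x = a := by
  refine ((le_prevIn ha hx.1).eq_of_not_lt fun hlt => ?_).symm
  exact ((nextIn_le (prevIn_mem hC hbot x) hlt).trans (prevIn_le C x)).not_gt hx.2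

lemma eventually_prevIn_eq [NoMaxOrder R] [TopologicalSpace R] [OrderTopology R] {X : Type*}
    [TopologicalSpace X] {f g : X → R} {x : X} (hf : ContinuousAt f x) (hg : ContinuousAt g x)
    (hC : IsClub C) (hwf : C.IsWF) (hbot : ⊥ ∈ C) (hsep : ∀ a ∈ C, ∀ x, f x < a → g x ≤ a)
    (hlt : f x < g x) : ∀ᶠ y in 𝓝 x, prevIn C (f y) = prevIn C (f x) := by
  have hmem := prevIn_mem hC hbot (f x)
  have hge : ∀ᶠ y in 𝓝 x, prevIn C (f x) ≤ f y := by
    filter_upwards [hg.eventually_const_lt ((prevIn_le C (f x)).trans_lt hlt)] with y hy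
    by_contra! hya
    exact (hsep _ hmem y hya).not_gt hy
  filter_upwards [hge, hf.eventually_lt_const (lt_nextIn_prevIn hC.isCofinal hwf (f x))] with y h h'
  exact prevIn_eq_of_mem_Ico hC hbot hmem ⟨h, h'⟩

end Consecutive

lemma continuous_sup_inf_of_le {X α : Type*} [TopologicalSpace X] [LinearOrder α]
    [TopologicalSpace α] [OrderTopology α] {f g h : X → α} (hf : Continuous f) (hg : Continuous g)
    (hfg : ∀ x, f x ≤ g x) (hh : ∀ x, f x < g x → ContinuousAt h x) :
    Continuous fun x => f x ⊔ g x ⊓ h x := by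
  refine continuous_iff_continuousAt.2 fun x => ?_
  rcases (hfg x).eq_or_lt with heq | hlt
  · have hx : f x ⊔ g x ⊓ h x = f x := sup_eq_left.2 (inf_le_left.trans heq.ge)
    rw [ContinuousAt, hx]
    exact tendsto_of_tendsto_of_tendsto_of_le_of_le (hf.tendsto x) (heq ▸ hg.tendsto x)
      (fun _ => le_sup_left) fun y => sup_le (hfg y) inf_le_left
  · exact hf.continuousAt.sup (hg.continuousAt.inf (hh x hlt))

section Homotopy

variable {R : Type*} [ConditionallyCompleteLinearOrderBot R] [TopologicalSpace R] [OrderTopology R]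
  [NoMaxOrder R] [PathConnectedSpace R] {C : Set R}

lemma homotopic_of_le {X : Type*} [TopologicalSpace X] {f g : C(X, R)} (hfg : ∀ x, f x ≤ g x)
    (hC : IsClub C) (hwf : C.IsWF) (hbot : ⊥ ∈ C) (hsep : ∀ a ∈ C, ∀ x, f x < a → g x ≤ a) :
    f.Homotopic g := by
  let P : ∀ a, Path a (nextIn C a) := fun a => PathConnectedSpace.somePath a (nextIn C a)
  refine ⟨{ toFun := fun q => f q.2 ⊔ g q.2 ⊓ P (prevIn C (f q.2)) q.1
            continuous_toFun := continuous_sup_inf_of_le (by fun_prop) (by fun_prop)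
              (fun q => hfg q.2) ?_
            map_zero_left := fun x => ?_
            map_one_left := fun x => ?_ }⟩
  · rintro ⟨t, x⟩ hlt
    have hprev : ∀ᶠ q : unitInterval × X in 𝓝 (t, x), prevIn C (f q.2) = prevIn C (f x) :=
      continuousAt_snd.eventually (eventually_prevIn_eq f.continuous.continuousAt
        g.continuous.continuousAt hC hwf hbot hsep hlt)
    have hP : ContinuousAt (fun q : unitInterval × X => P (prevIn C (f x)) q.1) (t, x) := by
      fun_prop
    exact hP.congr (hprev.mono fun q hq => by dsimp only; rw [hq])
  · simpa only [Path.source] using sup_eq_left.2 (inf_le_right.trans (prevIn_le C (f x)))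
  · have hgx : g x ≤ nextIn C (prevIn C (f x)) :=
      hsep _ (nextIn_mem_inter hC.isCofinal hwf _).1 x (lt_nextIn_prevIn hC.isCofinal hwf (f x))
    simpa only [Path.target, inf_eq_left.2 hgx] using sup_eq_right.2 (hfg x)

lemma homotopic_of_subset_nonseparating {X : Type*} [TopologicalSpace X] {f g : C(X, R)}
    (hC : IsClub C) (hwf : C.IsWF) (hbot : ⊥ ∈ C) (hsep : C ⊆ nonseparating f g) :
    f.Homotopic g := by
  have hf : f.Homotopic (f ⊔ g) := homotopic_of_le (fun _ => le_sup_left) hC hwf hbot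
    fun a ha x hx => sup_le hx.le ((hsep ha x).1 hx)
  have hg : g.Homotopic (f ⊔ g) := homotopic_of_le (fun _ => le_sup_right) hC hwf hbot
    fun a ha x hx => sup_le ((hsep ha x).2 hx) hx.le
  exact hf.trans hg.symm

end Homotopy

lemma firstCountableTopology_of_pathConnectedSpace {α : Type*} [LinearOrder α] [OrderBot α]
    [NoMaxOrder α] [TopologicalSpace α] [OrderTopology α] [PathConnectedSpace α] :
    FirstCountableTopology α where
  nhds_generated_countable x := by
    obtain ⟨z, hxz⟩ := exists_gt x
    let γ : Path ⊥ z := PathConnectedSpace.somePath ⊥ z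
    let γz : unitInterval → Iic z := fun t => ⟨γ t ⊓ z, inf_le_right⟩
    have hγz : Continuous γz := by fun_prop
    have hsurj : Function.Surjective γz := fun v => mem_range_of_exists_le_of_exists_ge hγz
      ⟨0, Subtype.coe_le_coe.1 (by simp [γz])⟩
      ⟨1, Subtype.coe_le_coe.1 (by simpa only [γz, γ.target, inf_idem] using mem_Iic.1 v.2)⟩
    have : PreconnectedSpace (Iic z) := hsurj.denseRange.preconnectedSpace hγz
    have : DenselyOrdered (Iic z) := denselyOrdered_of_preconnectedSpace
    have : TopologicalSpace.SeparableSpace (Iic z) := hsurj.denseRange.separableSpace hγz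
    have : SecondCountableTopology (Iic z) := .of_separableSpace_orderTopology _
    rw [← map_nhds_subtype_coe_eq_nhds (p := (· ∈ Iic z)) hxz.le (Iic_mem_nhds hxz)]
    infer_instance

theorem homotopic_iff_cofClass_eq_general {ι R : Type*} [DecidableEq ι] [Finite ι]
    [ConditionallyCompleteLinearOrderBot R] [TopologicalSpace R] [OrderTopology R] [NoMaxOrder R]
    [CountableInterFilter (atTop : Filter R)] [PathConnectedSpace R] {C : Set R} (hC : IsClub C)
    (hwf : C.IsWF) (hbot : ⊥ ∈ C) (f g : C(ι → R, R)) :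
    f.Homotopic g ↔ ∀ I, CofinalOnDiag f I ↔ CofinalOnDiag g I := by
  have : FirstCountableTopology R := firstCountableTopology_of_pathConnectedSpace
  refine ⟨cofinalOnDiag_iff_of_homotopic, fun h => ?_⟩
  exact homotopic_of_subset_nonseparating (isClub_inter hC (isClub_nonseparating h))
    (hwf.mono inter_subset_left) ⟨hbot, bot_mem_nonseparating f g⟩ inter_subset_right

/-! ### The long ray -/

lemma exists_isGLB_lex {α β : Type*} [LinearOrder α] [WellFoundedLT α]
    [ConditionallyCompleteLinearOrder β] [OrderBot β] {s : Set (α ×ₗ β)} (hs : s.Nonempty) :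
    ∃ a, IsGLB s a := by
  obtain ⟨x, hx, hmin⟩ := (InvImage.wf (fun y : α ×ₗ β => (ofLex y).1) wellFounded_lt).has_min s hs
  have hfst : ∀ y ∈ s, (ofLex x).1 ≤ (ofLex y).1 := fun y hy => not_lt.1 (hmin y hy)
  let t : Set β := {b | toLex ((ofLex x).1, b) ∈ s}
  have ht : IsGLB t (sInf t) := isGLB_csInf ⟨(ofLex x).2, hx⟩ (OrderBot.bddBelow t)
  refine ⟨toLex ((ofLex x).1, sInf t), fun y hy => ?_, fun w hw => ?_⟩
  · refine Prod.Lex.le_iff.2 ((hfst y hy).lt_or_eq.imp_right fun h => ⟨h, ht.1 ?_⟩)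
    have hxy : (ofLex x).1 = (ofLex y).1 := h
    rw [mem_ofPred_eq, hxy]
    exact hy
  · refine Prod.Lex.le_iff.2 ((Prod.Lex.monotone_fst w x (hw hx)).lt_or_eq.imp_right fun h =>
      ⟨h, ht.2 fun b hb => ?_⟩)
    exact (Prod.Lex.le_iff.1 (hw hb)).elim (fun hlt => absurd h hlt.ne) And.right

open Classical in
/-- Conditional completeness from the existence of infima of nonempty sets; the remaining suprema
and infima take the junk value `⊥`. -/
@[reducible]
def conditionallyCompleteLinearOrderBotOfExistsIsGLB {α : Type*} [i₁ : LinearOrder α]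
    [i₂ : OrderBot α] (h : ∀ s : Set α, s.Nonempty → ∃ a, IsGLB s a) :
    ConditionallyCompleteLinearOrderBot α where
  __ := i₁
  __ := i₂
  __ := LinearOrder.toLattice
  __ :=
    letI : InfSet α := ⟨fun s => if hs : s.Nonempty then (h s hs).choose else ⊥⟩
    conditionallyCompleteLatticeOfLatticeOfsInf _ fun s _ hs => by
      simpa only [sInf, dif_pos hs] using (h s hs).choose_spec
  csSup_empty := by
    simpa [sSup] using (h univ ⟨⊥, trivial⟩).choose_spec.unique isGLB_univ
  csSup_of_not_bddAbove s hs := by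
    rw [BddAbove] at hs
    simpa [sSup, hs] using ((h univ ⟨⊥, trivial⟩).choose_spec.unique isGLB_univ).symm
  csInf_of_not_bddBelow s hs := absurd (OrderBot.bddBelow s) hs

/-- A left inverse of `φ` is monotone and onto, hence continuous, even if `φ` is not continuous. -/
lemma exists_continuous_surjective_Iic {R α : Type*} [ConditionallyCompleteLinearOrderBot R]
    [TopologicalSpace R] [OrderTopology R] [DenselyOrdered R] [LinearOrder α]
    [TopologicalSpace α] [OrderTopology α] {z : R} {φ : R → α} (hφ : StrictMonoOn φ (Iic z)) :
    ∃ γ : α → Iic z, Continuous γ ∧ Function.Surjective γ := by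
  let γ : α → Iic z := fun s => ⟨sSup {v | v ≤ z ∧ φ v ≤ s}, csSup_le' fun v hv => hv.1⟩
  have hmono : Monotone γ := fun s t hst =>
    csSup_le_csSup' ⟨z, fun v hv => hv.1⟩ fun v hv => ⟨hv.1, hv.2.trans hst⟩
  have hsurj : Function.Surjective γ := fun v => ⟨φ v, Subtype.ext (IsGreatest.csSup_eq
    ⟨⟨v.2, le_rfl⟩, fun w hw => (hφ.le_iff_le hw.1 v.2).1 hw.2⟩)⟩
  exact ⟨γ, hmono.continuous_of_surjective hsurj, hsurj⟩

lemma exists_strictMonoOn_real_of_countable {α : Type*} [LinearOrder α] {s : Set α}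
    (hs : s.Countable) : ∃ e : α → ℝ, StrictMonoOn e s := by
  have := hs.to_subtype
  obtain ⟨e⟩ := Order.embedding_from_countable_to_dense s ℝ
  have hext : ∀ x : s, Function.extend Subtype.val e 0 (x : α) = e x :=
    Subtype.val_injective.extend_apply e 0
  refine ⟨Function.extend Subtype.val e 0, fun a ha b hb hab => ?_⟩
  rw [hext ⟨a, ha⟩, hext ⟨b, hb⟩]
  exact e.strictMono hab

lemma succ_lt_omega1 {o : Ordinal} (ho : o < Omega1) : Order.succ o < Omega1 :=
  (Cardinal.isSuccLimit_omega 1).succ_lt ho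

lemma countable_Iic_of_lt_omega1 {o : Ordinal} (ho : o < Omega1) : (Iic o).Countable := by
  rw [← Order.Iio_succ, ← Cardinal.le_aleph0_iff_set_countable, Cardinal.mk_Iio_ordinal,
    Cardinal.lift_le_aleph0, ← Order.lt_succ_iff, Cardinal.succ_aleph0,
    ← Cardinal.lt_omega_iff_card_lt]
  exact succ_lt_omega1 ho

namespace LongRay

/-- The ordinal part of a point of the long ray. -/
def fst (x : LongRay) : Ordinal := (ofLex (α := _ ×ₗ _) x).1.1

/-- The fractional part of a point of the long ray. -/
def snd (x : LongRay) : ℝ := (ofLex (α := _ ×ₗ _) x).2.1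

lemma fst_lt (x : LongRay) : x.fst < Omega1 := (ofLex (α := _ ×ₗ _) x).1.2

lemma snd_mem (x : LongRay) : x.snd ∈ Ico (0 : ℝ) 1 := (ofLex (α := _ ×ₗ _) x).2.2

lemma lt_iff {x y : LongRay} : x < y ↔ x.fst < y.fst ∨ x.fst = y.fst ∧ x.snd < y.snd := by
  refine (Prod.Lex.lt_iff (α := {o : Ordinal // o < Omega1}) (β := Ico (0 : ℝ) 1)).trans ?_
  simp only [← Subtype.coe_lt_coe, Subtype.ext_iff]
  rfl

lemma le_iff {x y : LongRay} : x ≤ y ↔ x.fst < y.fst ∨ x.fst = y.fst ∧ x.snd ≤ y.snd := by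
  refine (Prod.Lex.le_iff (α := {o : Ordinal // o < Omega1}) (β := Ico (0 : ℝ) 1)).trans ?_
  simp only [← Subtype.coe_lt_coe, ← Subtype.coe_le_coe, Subtype.ext_iff]
  rfl

lemma monotone_fst : Monotone fst := fun _ _ h =>
  (le_iff.1 h).elim LT.lt.le fun h => h.1.le

instance : OrderBot LongRay where
  bot := rayZero
  bot_le x := le_iff.2 ((zero_le (a := x.fst)).lt_or_eq.imp_right fun h => ⟨h, x.snd_mem.1⟩)

instance : ConditionallyCompleteLinearOrderBot LongRay :=
  have : Fact ((0 : ℝ) < 1) := ⟨one_pos⟩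
  let _ : Inhabited (Ico (0 : ℝ) 1) := ⟨⊥⟩
  conditionallyCompleteLinearOrderBotOfExistsIsGLB fun _ hs =>
    exists_isGLB_lex (α := {o : Ordinal // o < Omega1}) (β := Ico (0 : ℝ) 1) hs

instance : DenselyOrdered LongRay :=
  inferInstanceAs (DenselyOrdered ({o : Ordinal // o < Omega1} ×ₗ Ico (0 : ℝ) 1))

instance : NoMaxOrder LongRay :=
  have : Nonempty (Ico (0 : ℝ) 1) := ⟨⟨0, by simp⟩⟩
  inferInstanceAs (NoMaxOrder ({o : Ordinal // o < Omega1} ×ₗ Ico (0 : ℝ) 1))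

lemma fst_ordR {o : Ordinal} (ho : o < Omega1) : (ordR o).fst = o :=
  congrArg fst (dif_pos ho)

lemma snd_ordR (o : Ordinal) : (ordR o).snd = 0 := by
  by_cases ho : o < Omega1
  · exact congrArg snd (dif_pos ho)
  · exact congrArg snd (dif_neg ho)

lemma bddAbove_of_countable {s : Set LongRay} (hs : s.Countable) : BddAbove s := by
  have := hs.to_subtype
  have hlt : ⨆ x : s, x.1.fst < Omega1 := Ordinal.iSup_lt_omega_one fun x => x.1.fst_lt
  refine ⟨ordR (Order.succ (⨆ x : s, x.1.fst)), fun x hx => le_iff.2 (Or.inl ?_)⟩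
  rw [fst_ordR (succ_lt_omega1 hlt), Order.lt_succ_iff]
  exact Ordinal.le_iSup (fun x : s => x.1.fst) ⟨x, hx⟩

instance : CountableInterFilter (atTop : Filter LongRay) :=
  countableInterFilter_atTop_of_bddAbove fun _ => bddAbove_of_countable

lemma strictMonoOn_lineMap {e : Ordinal → ℝ} {o : Ordinal} (he : StrictMonoOn e (Iic o)) :
    StrictMonoOn (fun x : LongRay => AffineMap.lineMap (e x.fst) (e (Order.succ x.fst)) x.snd)
      {x | Order.succ x.fst ≤ o} := by
  have hsucc : ∀ a, Order.succ a ≤ o → e a < e (Order.succ a) := fun a ha =>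
    he ((Order.le_succ a).trans ha) ha (Order.lt_succ a)
  intro x hx y hy hxy
  dsimp only
  rcases lt_iff.1 hxy with hlt | ⟨heq, hlt⟩
  · calc AffineMap.lineMap (e x.fst) (e (Order.succ x.fst)) x.snd
        < e (Order.succ x.fst) := (lineMap_lt_right_iff_lt x.snd_mem.2).2 (hsucc _ hx)
      _ ≤ e y.fst :=
        he.monotoneOn hx (mem_Iic.2 ((Order.le_succ _).trans hy)) (Order.succ_le_of_lt hlt)
      _ ≤ AffineMap.lineMap (e y.fst) (e (Order.succ y.fst)) y.snd :=
        (left_le_lineMap_iff_nonneg (hsucc _ hy)).2 y.snd_mem.1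
  · rw [heq]
    exact (lineMap_lt_lineMap_iff_of_lt' (hsucc _ hy)).2 hlt

instance : PathConnectedSpace LongRay where
  nonempty := ⟨⊥⟩
  joined x y := by
    obtain ⟨e, he⟩ := exists_strictMonoOn_real_of_countable
      (countable_Iic_of_lt_omega1 (succ_lt_omega1 (x ⊔ y).fst_lt))
    obtain ⟨γ, hγ, hsurj⟩ := exists_continuous_surjective_Iic (z := x ⊔ y)
      ((strictMonoOn_lineMap he).mono fun w hw => Order.succ_le_succ (monotone_fst hw))
    obtain ⟨s, hs⟩ := hsurj ⟨x, le_sup_left (b := y)⟩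
    obtain ⟨t, ht⟩ := hsurj ⟨y, le_sup_right (a := x)⟩
    simpa [hs, ht] using (PathConnectedSpace.joined s t).map (continuous_subtype_val.comp hγ)

/-- The set `ω₁ ⊆ 𝖱` of countable ordinals. -/
def ordinals : Set LongRay := {x | x.snd = 0}

lemma isWF_ordinals : ordinals.IsWF :=
  (InvImage.wf fst wellFounded_lt).wellFoundedOn.mono' fun _ hy _ hx hxy =>
    (lt_iff.1 hxy).resolve_right fun h => (h.2.trans_eq (hx.trans hy.symm)).false

lemma isClub_ordinals : IsClub ordinals where
  dirSupClosed := fun t ht _ _ a ha => by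
    have hub : ordR a.fst ∈ upperBounds t := fun y hy => le_iff.2 (by
      rw [fst_ordR a.fst_lt, snd_ordR]
      exact (monotone_fst (ha.1 hy)).lt_or_eq.imp_right fun h => ⟨h, (ht hy).le⟩)
    have hle := le_iff.1 (ha.2 hub)
    rw [fst_ordR a.fst_lt, snd_ordR] at hle
    exact le_antisymm (hle.resolve_left (lt_irrefl _)).2 a.snd_mem.1
  isCofinal x := ⟨ordR (Order.succ x.fst), snd_ordR _, le_iff.2 (Or.inl (by
    rw [fst_ordR (succ_lt_omega1 x.fst_lt)]
    exact Order.lt_succ x.fst))⟩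

end LongRay

lemma delta_eq_range_diagPt (n : ℕ) (I : Finset (Fin n)) (c : Fin n → LongRay) :
    Delta n I c = range (diagPt I c) := by
  ext x
  constructor
  · rintro ⟨hI, hc⟩
    rcases I.eq_empty_or_nonempty with rfl | ⟨i, hi⟩
    · exact ⟨⊥, funext fun j => (hc j (Finset.notMem_empty j)).symm⟩
    · refine ⟨x i, funext fun j => ?_⟩
      by_cases hj : j ∈ I
      · rw [diagPt_of_mem hj, hI i hi j hj]
      · rw [diagPt_of_notMem hj, hc j hj]
  · rintro ⟨a, rfl⟩
    exact ⟨fun i hi j hj => by rw [diagPt_of_mem hi, diagPt_of_mem hj],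
      fun j hj => diagPt_of_notMem hj c a⟩

lemma mem_cofClass_iff {n : ℕ} (f : C(Fin n → LongRay, LongRay)) (I : Finset (Fin n)) :
    I ∈ cofClass n f ↔ CofinalOnDiag f I := by
  rw [cofClass, mem_ofPred_eq, ICofinal, delta_eq_range_diagPt, ← range_comp]
  rfl

/-- two continuous maps `f, g : 𝖱ⁿ → 𝖱` are (freely) homotopic iff
they have the same cofinality class. -/
theorem homotopic_iff_cofClass_eq (n : ℕ) (f g : C(Fin n → LongRay, LongRay)) :
    f.Homotopic g ↔ cofClass n f = cofClass n g := by
  simp only [Set.ext_iff, mem_cofClass_iff]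
  exact homotopic_iff_cofClass_eq_general LongRay.isClub_ordinals LongRay.isWF_ordinals rfl f g
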